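/- arXiv:1901.07827 — 2 statements merged into one kernel-verified Lean document; each statement's English description precedes it below -/
import Mathlib

section
/- Let n be a positive natural, t ∈ ℝⁿ with t ≠ 0, and λ > 0, ρ > 0. Then f* = t · (max(‖t‖₂ − λ/ρ, 0) / ‖t‖₂) is the unique global minimizer over f ∈ ℝⁿ of the function f ↦ λ·‖f‖₂ + (ρ/2)·‖f − t‖₂². Moreover, if t = 0, then f* = 0 is the unique global minimizer. -/
theorem prox_key {n : ℕ} (t s f : EuclideanSpace ℝ (Fin n)) (lam ρ : ℝ) (hρ : 0 < ρ)
    (h1 : ρ * ‖t - s‖ ≤ lam) (h2 : ρ * inner ℝ s (t - s) = lam * ‖s‖) :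
    lam * ‖s‖ + ρ / 2 * ‖s - t‖ ^ 2 + ρ / 2 * ‖f - s‖ ^ 2 ≤ lam * ‖f‖ + ρ / 2 * ‖f - t‖ ^ 2 := by
  have e : f - t = (f - s) - (t - s) := by abel
  have h3 := norm_sub_sq_real (f - s) (t - s)
  rw [← e, inner_sub_left] at h3
  have h4 := real_inner_le_norm f (t - s)
  have h5 : ρ * inner ℝ f (t - s) ≤ lam * ‖f‖ := by
    calc ρ * inner ℝ f (t - s) ≤ ρ * (‖f‖ * ‖t - s‖) := by gcongr
      _ = (ρ * ‖t - s‖) * ‖f‖ := by ring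
      _ ≤ lam * ‖f‖ := by gcongr
  rw [h3, norm_sub_rev s t]
  linarith

theorem prox_min {n : ℕ} (t s : EuclideanSpace ℝ (Fin n)) (lam ρ : ℝ) (hρ : 0 < ρ)
    (h : EuclideanSpace ℝ (Fin n) → ℝ)
    (hh : ∀ f, h f = lam * ‖f‖ + ρ / 2 * ‖f - t‖ ^ 2)
    (h1 : ρ * ‖t - s‖ ≤ lam) (h2 : ρ * inner ℝ s (t - s) = lam * ‖s‖) :
    (∀ f, h s ≤ h f) ∧ ∀ f, f ≠ s → h s < h f := by
  constructor
  · intro f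
    have := prox_key t s f lam ρ hρ h1 h2
    have h3 : 0 ≤ ρ / 2 * ‖f - s‖ ^ 2 := by positivity
    rw [hh, hh]; linarith
  · intro f hf
    have := prox_key t s f lam ρ hρ h1 h2
    have h4 : 0 < ‖f - s‖ := norm_pos_iff.mpr (sub_ne_zero.mpr hf)
    have h3 : 0 < ρ / 2 * ‖f - s‖ ^ 2 := by positivity
    rw [hh, hh]; linarith

/-- Group soft-thresholding: for `t ≠ 0`, `f* = (max(‖t‖ − λ/ρ, 0)/‖t‖) • t` is the
unique global minimizer of `f ↦ λ·‖f‖₂ + (ρ/2)·‖f − t‖₂²`; for `t = 0`, `f* = 0` is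
the unique global minimizer. -/
theorem stmt6 (n : ℕ) (hn : 0 < n) (t : EuclideanSpace ℝ (Fin n))
    (lam ρ : ℝ) (hlam : 0 < lam) (hρ : 0 < ρ)
    (h : EuclideanSpace ℝ (Fin n) → ℝ)
    (hh : ∀ f, h f = lam * ‖f‖ + ρ / 2 * ‖f - t‖ ^ 2) :
    (t ≠ 0 →
      (∀ f, h ((max (‖t‖ - lam / ρ) 0 / ‖t‖) • t) ≤ h f) ∧
        ∀ f, f ≠ (max (‖t‖ - lam / ρ) 0 / ‖t‖) • t →
          h ((max (‖t‖ - lam / ρ) 0 / ‖t‖) • t) < h f) ∧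
      (t = 0 → (∀ f, h 0 ≤ h f) ∧ ∀ f, f ≠ 0 → h 0 < h f) := by
  constructor
  · intro ht
    have hT : 0 < ‖t‖ := norm_pos_iff.mpr ht
    apply prox_min t _ lam ρ hρ h hh
    · rcases le_total (‖t‖ - lam / ρ) 0 with hc | hc
      · rw [max_eq_right hc]
        simp only [zero_div, zero_smul, sub_zero]
        rw [sub_nonpos, le_div_iff₀ hρ] at hc
        linarith
      · rw [max_eq_left hc]
        have e : t - ((‖t‖ - lam / ρ) / ‖t‖) • t = (lam / ρ / ‖t‖) • t := by
          rw [sub_div, div_self hT.ne', sub_smul, one_smul]; abel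
        rw [e, norm_smul, Real.norm_of_nonneg (by positivity)]
        apply le_of_eq
        field_simp
    · rcases le_total (‖t‖ - lam / ρ) 0 with hc | hc
      · rw [max_eq_right hc]
        simp
      · rw [max_eq_left hc]
        have e : t - ((‖t‖ - lam / ρ) / ‖t‖) • t = (lam / ρ / ‖t‖) • t := by
          rw [sub_div, div_self hT.ne', sub_smul, one_smul]; abel
        rw [e, norm_smul, Real.norm_of_nonneg (div_nonneg hc hT.le), inner_smul_left,
          inner_smul_right, real_inner_self_eq_norm_sq]
        simp only [conj_trivial]
        field_simp
  · intro ht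
    apply prox_min t _ lam ρ hρ h hh
    · simp [ht, hlam.le]
    · simp
end

section
/- Let m, n be positive naturals, let T be an m×n real matrix with rows T₁,…,T_m, and let λ > 0, ρ > 0. Define F* to be the m×n matrix whose i-th row is Tᵢ · (max(‖Tᵢ‖₂ − λ/ρ, 0)/‖Tᵢ‖₂) when Tᵢ ≠ 0, and the zero vector when Tᵢ = 0. Then F* is a global minimizer over all m×n real matrices F of the objective λ·‖F‖_{2,1} + (ρ/2)·‖F − T‖_F², where ‖F‖_{2,1} = Σᵢ ‖Fᵢ‖₂ is the sum of the Euclidean norms of the rows of F and ‖·‖_F denotes the Frobenius norm. -/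
theorem row_aux (n : ℕ) (t f : Fin n → ℝ) (lam ρ c : ℝ) (hlam : 0 < lam) (hρ : 0 < ρ)
    (hc0 : 0 ≤ c)
    (hc : c * Real.sqrt (∑ j, (t j) ^ 2) = max (Real.sqrt (∑ j, (t j) ^ 2) - lam / ρ) 0) :
    lam * Real.sqrt (∑ j, (c * t j) ^ 2) + ρ / 2 * ∑ j, (c * t j - t j) ^ 2 ≤
      lam * Real.sqrt (∑ j, (f j) ^ 2) + ρ / 2 * ∑ j, (f j - t j) ^ 2 := by
  have hT : 0 ≤ ∑ j, (t j) ^ 2 := Finset.sum_nonneg fun j _ => sq_nonneg _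
  have hF : 0 ≤ ∑ j, (f j) ^ 2 := Finset.sum_nonneg fun j _ => sq_nonneg _
  have h1 : Real.sqrt (∑ j, (c * t j) ^ 2) = c * Real.sqrt (∑ j, (t j) ^ 2) := by
    simp only [mul_pow]
    rw [← Finset.mul_sum, Real.sqrt_mul (sq_nonneg c), Real.sqrt_sq hc0]
  have h2 : ∑ j, (c * t j - t j) ^ 2 = (c - 1) ^ 2 * ∑ j, (t j) ^ 2 := by
    rw [Finset.mul_sum]
    exact Finset.sum_congr rfl fun j _ => by ring
  have h3 : ∑ j, (f j - t j) ^ 2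
      = ∑ j, (f j) ^ 2 - 2 * ∑ j, f j * t j + ∑ j, (t j) ^ 2 := by
    rw [Finset.mul_sum, ← Finset.sum_sub_distrib, ← Finset.sum_add_distrib]
    exact Finset.sum_congr rfl fun j _ => by ring
  have h4 := Real.sum_mul_le_sqrt_mul_sqrt Finset.univ f t
  rw [h1, h2, h3]
  have h5 := Real.sq_sqrt hT
  have h6 := Real.sq_sqrt hF
  have h7 := Real.sqrt_nonneg (∑ j, (t j) ^ 2)
  have h8 := Real.sqrt_nonneg (∑ j, (f j) ^ 2)
  generalize Real.sqrt (∑ j, (t j) ^ 2) = a at *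
  generalize Real.sqrt (∑ j, (f j) ^ 2) = b at *
  rw [← h5, ← h6]
  obtain ⟨k, rfl⟩ : ∃ k, lam = ρ * k := ⟨lam / ρ, by field_simp⟩
  have hk : 0 < k := pos_of_mul_pos_right hlam hρ.le
  rw [mul_div_cancel_left₀ _ hρ.ne'] at hc
  have key : k * (c * a) + (c * a - a) ^ 2 / 2 ≤ k * b + (b - a) ^ 2 / 2 := by
    rw [hc]
    rcases le_total (a - k) 0 with h | h
    · rw [max_eq_right h]; nlinarith [mul_nonneg h8 (sub_nonneg.2 (sub_nonpos.1 h))]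
    · rw [max_eq_left h]; nlinarith [sq_nonneg (b - a + k)]
  have e1 := mul_le_mul_of_nonneg_left key hρ.le
  have e2 := mul_le_mul_of_nonneg_left h4 hρ.le
  nlinarith [e1, e2]

/-- Row-wise group soft-thresholding (Eq. 11): `Fstar` is a global minimizer of the
`ℓ_{2,1}`-regularized proximal objective `λ·‖F‖_{2,1} + (ρ/2)·‖F − T‖_F²`. -/
theorem stmt7 (m n : ℕ) (hm : 0 < m) (hn : 0 < n)
    (T : Matrix (Fin m) (Fin n) ℝ) (lam ρ : ℝ) (hlam : 0 < lam) (hρ : 0 < ρ)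
    (Fstar : Matrix (Fin m) (Fin n) ℝ)
    (hFstar : ∀ i, Fstar i =
      if T i = 0 then 0
      else (max (Real.sqrt (∑ j, (T i j) ^ 2) - lam / ρ) 0 /
        Real.sqrt (∑ j, (T i j) ^ 2)) • T i) :
    ∀ F : Matrix (Fin m) (Fin n) ℝ,
      lam * (∑ i, Real.sqrt (∑ j, (Fstar i j) ^ 2)) +
          ρ / 2 * ∑ i, ∑ j, (Fstar i j - T i j) ^ 2 ≤
        lam * (∑ i, Real.sqrt (∑ j, (F i j) ^ 2)) +
          ρ / 2 * ∑ i, ∑ j, (F i j - T i j) ^ 2 := by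
  intro F
  simp only [Finset.mul_sum (s := (Finset.univ : Finset (Fin m)))]
  rw [← Finset.sum_add_distrib, ← Finset.sum_add_distrib]
  refine Finset.sum_le_sum fun i _ => ?_
  have hi : Fstar i = (max (Real.sqrt (∑ j, (T i j) ^ 2) - lam / ρ) 0 /
        Real.sqrt (∑ j, (T i j) ^ 2)) • T i := by
    rw [hFstar i]
    split_ifs with h
    · rw [h, smul_zero]
    · rfl
  have hij : ∀ j, Fstar i j = (max (Real.sqrt (∑ j, (T i j) ^ 2) - lam / ρ) 0 /
        Real.sqrt (∑ j, (T i j) ^ 2)) * T i j := fun j => by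
    rw [hi]; rfl
  simp only [hij]
  refine row_aux n (T i) (F i) lam ρ _ hlam hρ (by positivity) ?_
  by_cases h0 : Real.sqrt (∑ j, (T i j) ^ 2) = 0
  · rw [h0, mul_zero, max_eq_right]
    have := div_pos hlam hρ
    linarith
  · exact div_mul_cancel₀ _ h0
end
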